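/- Let (X_V, T) be a rank-one subshift, let (Y, S) be a subshift of ({0,…,b−1})^ℤ, and let φ: X_V → Y be a surjection induced by a sliding block code c of window size R+1, where lh(v_1) > R. For n ≥ 1 let α_n be the word of length lh(v_n) − R given by α_n(k) = c(v_n[k, k+R]) for 0 ≤ k ≤ lh(v_n) − R − 1. Then for every y ∈ Y and all integers i ≤ j, there exists n ≥ 1 such that the word y[i, j] occurs in α_n. -/

import Mathlib

/-!
Write `y = φ x` with `x ∈ X_V`. The letters of `y[i, j]` depend only on the finite window
`x[i, j + R]`, which occurs in `V` at some position `t` by definition of `X_V`. Since the lengths of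
the `v n` are unbounded (`IsRankOneSeq.lt_length`), this occurrence lies inside the initial segment
`v n` of `V` for `n` large, and applying the block code to it exhibits `y[i, j]` in `α n` at
position `t`.
-/

/-- The shift map on bi-infinite sequences: `(shiftZ x) k = x (k+1)`. -/
def shiftZ {α : Type*} (x : ℤ → α) : ℤ → α := fun k => x (k + 1)

/-- `(q, a, v)` is a rank-one construction sequence: `q` is the cutting parameter
(each `q n > 1`), `a` is the spacer parameter (the relevant values are `a n i` for
`1 ≤ i < q n`), `v 0 = 0`, and
`v (n+1) = v n 1^{a n 1} v n 1^{a n 2} ⋯ v n 1^{a n (q n − 1)} v n`. -/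
def IsRankOneSeq (q : ℕ → ℕ) (a : ℕ → ℕ → ℕ) (v : ℕ → List (Fin 2)) : Prop :=
  (∀ n, 1 < q n) ∧ v 0 = [0] ∧
    ∀ n, v (n + 1) = v n ++
      (List.ofFn fun i : Fin (q n - 1) =>
        List.replicate (a n (i.1 + 1)) 1 ++ v n).flatten

/-- `V` is the infinite rank-one word: every `v n` is an initial segment of `V`. -/
def IsLimitWord (v : ℕ → List (Fin 2)) (V : ℕ → Fin 2) : Prop :=
  ∀ (n k : ℕ) (h : k < (v n).length), V k = (v n).get ⟨k, h⟩

/-- The rank-one subshift determined by the infinite rank-one word `V`: the set of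
all bi-infinite binary words all of whose finite subwords occur in `V`. -/
def XV (V : ℕ → Fin 2) : Set (ℤ → Fin 2) :=
  {x | ∀ (i : ℤ) (m : ℕ), ∃ t : ℕ, ∀ k : ℕ, k < m → x (i + (k : ℤ)) = V (t + k)}

/-- The spacer parameter is bounded. -/
def BoundedSpacer (q : ℕ → ℕ) (a : ℕ → ℕ → ℕ) : Prop :=
  ∃ B, ∀ n i, 1 ≤ i → i < q n → a n i ≤ B

/-- The spacer parameter is unbounded. -/
def UnboundedSpacer (q : ℕ → ℕ) (a : ℕ → ℕ → ℕ) : Prop :=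
  ∀ B, ∃ n i, 1 ≤ i ∧ i < q n ∧ B < a n i

/-- The words `v n` grow without bound: since `q n > 1`, the word `v (n + 1)` contains at least two
copies of the nonempty word `v n`. -/
theorem IsRankOneSeq.lt_length {q : ℕ → ℕ} {a : ℕ → ℕ → ℕ} {v : ℕ → List (Fin 2)}
    (hv : IsRankOneSeq q a v) (n : ℕ) : n < (v n).length := by
  obtain ⟨hq, h0, hs⟩ := hv
  induction n with
  | zero => simp [h0]
  | succ n ih =>
    obtain ⟨r, hr⟩ : ∃ r, q n - 1 = r + 1 := ⟨q n - 2, by have := hq n; omega⟩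
    rw [hs n, hr, List.ofFn_succ]
    simp only [List.flatten_cons, List.length_append]
    omega

/-- Let `(X_V, T)` be a rank-one subshift, `(Y, S)` a subshift of `(Fin b)^ℤ`, and
`φ` a surjection of `X_V` onto `Y` induced by a sliding block code `c` of window
size `R+1` (with `lh(v 1) > R`).  For `n ≥ 1` let `α n` be the word of length
`lh(v n) − R` obtained by applying `c` to `v n`, i.e.
`α n (k) = c (v n [k, k+R])`.  Then for every `y ∈ Y` and all integers `i ≤ j`,
the word `y[i, j]` occurs in `α n` for some `n ≥ 1`. -/
theorem subword_of_image_occurs_in_alpha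
    (q : ℕ → ℕ) (a : ℕ → ℕ → ℕ) (v : ℕ → List (Fin 2)) (hv : IsRankOneSeq q a v)
    (V : ℕ → Fin 2) (hV : IsLimitWord v V)
    (b : ℕ) [NeZero b] (hb : 2 ≤ b)
    (Y : Set (ℤ → Fin b)) (hYclosed : IsClosed Y) (hYinv : shiftZ '' Y = Y)
    (R : ℕ) (hR : R < (v 1).length)
    (c : (Fin (R + 1) → Fin 2) → Fin b)
    (φ : (ℤ → Fin 2) → ℤ → Fin b)
    (hφ : ∀ (x : ℤ → Fin 2) (k : ℤ), φ x k = c fun j => x (k + (j.1 : ℤ)))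
    (hmaps : ∀ x ∈ XV V, φ x ∈ Y)
    (hsurj : ∀ y ∈ Y, ∃ x ∈ XV V, φ x = y)
    (α : ℕ → List (Fin b))
    (hαlen : ∀ n, (α n).length = (v n).length - R)
    (hαval : ∀ n k : ℕ, k + R < (v n).length →
      (α n)[k]? = some (c fun j => (v n).getD (k + j.1) 1)) :
    ∀ y ∈ Y, ∀ i j : ℤ, i ≤ j → ∃ n : ℕ, 1 ≤ n ∧ ∃ t : ℕ,
      ∀ k : ℕ, i + (k : ℤ) ≤ j → (α n)[t + k]? = some (y (i + (k : ℤ))) := by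
  intro y hy i j _
  obtain ⟨x, hx, rfl⟩ := hsurj y hy
  -- The letters of `φ x` on `[i, j]` are determined by the letters of `x` on `[i, j + R]`.
  obtain ⟨t, ht⟩ := hx i ((j - i).toNat + 1 + R)
  set n := t + ((j - i).toNat + 1 + R) with hn
  have hlen := hv.lt_length n
  refine ⟨n, by omega, t, fun k hk => ?_⟩
  have hk' : k ≤ (j - i).toNat := by omega
  rw [hαval n (t + k) (by omega), hφ]
  congr 2
  funext l
  have hl := l.isLt
  have hlt : t + k + l.1 < (v n).length := by omega
  have h := ht (k + l.1) (by omega)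
  rw [← add_assoc t k, hV n _ hlt] at h
  rw [List.getD_eq_getElem _ _ hlt, add_assoc i, ← Nat.cast_add, h]
  rfl
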